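/- arXiv:1409.1627 — 2 statements merged into one kernel-verified Lean document; each statement's English description precedes it below -/
import Mathlib

section
/- The set 𝒟^ℓ = {δℓ(n) : n a positive integer} of all addition chain defect values is a well-ordered subset of the real numbers (under the usual ordering, i.e., it contains no infinite strictly decreasing sequence), and its order type is exactly ω^ω. -/
/-- `c` is an addition chain: a nonempty list of positive integers starting at `1`
such that every later entry is the sum of two (not necessarily distinct) earlier entries. -/
def IsAdditionChain (c : List ℕ) : Prop :=
  c.getD 0 0 = 1 ∧
    ∀ k, 0 < k → k < c.length →
      ∃ i j, i < k ∧ j < k ∧ c.getD k 0 = c.getD i 0 + c.getD j 0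

/-- `c` is an addition chain whose last entry is `n`; its length is `c.length - 1`. -/
def IsAdditionChainFor (c : List ℕ) (n : ℕ) : Prop :=
  IsAdditionChain c ∧ c.getD (c.length - 1) 0 = n

/-- ν₂(n): the number of 1's in the binary expansion of `n`. -/
def binaryWeight (n : ℕ) : ℕ := (Nat.digits 2 n).sum

/-- `ℓ^A(n)`: the least length (number of steps, i.e. one less than the number of
entries) of an addition chain for `n` belonging to the set `A` of addition chains. -/
noncomputable def chainLength (A : Set (List ℕ)) (n : ℕ) : ℕ :=
  sInf {r | ∃ c ∈ A, IsAdditionChainFor c n ∧ c.length = r + 1}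

/-- A set `A` of addition chains is admissible if (i) every positive `n` has a chain
in `A` of length at most `⌊log₂ n⌋ + ν₂(n) - 1` (i.e. with at most
`⌊log₂ n⌋ + ν₂(n)` entries) and (ii) `ℓ^A(2n) ≤ ℓ^A(n) + 1` for all positive `n`. -/
def Admissible (A : Set (List ℕ)) : Prop :=
  (∀ n : ℕ, 0 < n → ∃ c ∈ A, IsAdditionChainFor c n ∧
      c.length ≤ Nat.log 2 n + binaryWeight n) ∧
  ∀ n : ℕ, 0 < n → chainLength A (2 * n) ≤ chainLength A n + 1

/-- The A-defect `δ^A(n) = ℓ^A(n) - log₂ n`. -/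
noncomputable def Adefect (A : Set (List ℕ)) (n : ℕ) : ℝ :=
  (chainLength A n : ℝ) - Real.logb 2 n

/-- `m` is A-stable if `ℓ^A(2^k m) = ℓ^A(m) + k` for all `k ≥ 0`. -/
def AStable (A : Set (List ℕ)) (m : ℕ) : Prop :=
  ∀ k : ℕ, chainLength A (2 ^ k * m) = chainLength A m + k

/-- `𝒟^A`: the set of all A-defect values. -/
def defectSet (A : Set (List ℕ)) : Set ℝ :=
  {d | ∃ n : ℕ, 0 < n ∧ d = Adefect A n}

/-- `𝒟^A_st`: the set of all A-stable defects. -/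
def stableDefectSet (A : Set (List ℕ)) : Set ℝ :=
  {d | ∃ n : ℕ, 0 < n ∧ AStable A n ∧ d = Adefect A n}

open scoped Classical in
/-- The order type of a well-ordered subset `S` of a linear order
(junk value `0` if `S` is not well-ordered, i.e. not `Set.IsWF`). -/
noncomputable def setOrderType {X : Type*} [LinearOrder X] (S : Set X) : Ordinal :=
  if h : S.IsWF then
    letI : WellFoundedLT S := ⟨h⟩
    Ordinal.type ((· < ·) : S → S → Prop)
  else 0

/-- `ℓ(n)`: the addition chain length of `n` (minimum over all addition chains). -/
noncomputable def addChainLength (n : ℕ) : ℕ :=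
  sInf {r | ∃ c, IsAdditionChainFor c n ∧ c.length = r + 1}

/-- The addition chain defect `δℓ(n) = ℓ(n) - log₂ n`. -/
noncomputable def addDefect (n : ℕ) : ℝ :=
  (addChainLength n : ℝ) - Real.logb 2 n

/-!
For a positive integer `n` put `x = n / 2 ^ ⌊log₂ n⌋ ∈ [1, 2)` and `c = ℓ(n) - ⌊log₂ n⌋`. The
defect of `n` is `c - log₂ x`, so `c` is the ceiling of the defect.

*Upper bound.* After `r` steps of an addition chain, the largest entry `m` and the largest binary
weight `w` satisfy `w * m ^ 4 ≤ 16 ^ r`: a doubling leaves the binary weight unchanged, while any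
other step at most doubles `w` but lets `m` grow only like the Fibonacci numbers. Hence `x` has at
most `16 ^ c` nonzero binary digits. The dyadic numbers in `(0, 2)` with at most `K` nonzero digits
have reversed order type at most `ω ^ K`, by deleting the leading digit, so the defects with a given
ceiling `c` have order type at most `ω ^ (16 ^ c)`, and all of them together at most `ω ^ ω`.

*Lower bound.* If `m / 2 ^ e` is obtained with `j` steps more than `e`, then `m / 2 ^ e + 2 ^ (-i)`
is obtained with `j + 1` more, for all large `i`; iterating this `k` times produces a reversed
copy of `ω ^ k` in `[1, 2)`. For these numbers `m` the difference `ℓ(m) - e` is one of `0, …, k`,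
and `ω ^ k` survives a partition into finitely many pieces, so some difference occurs along a whole
copy of `ω ^ k`, on which the defect is an increasing function of `-m / 2 ^ e`.
-/

open Filter Ordinal Set
open scoped Nat Pointwise Topology

universe u v

/-! ### Bounds on order types -/

section OrderType

variable {X : Type u}

/-- `S` is well-ordered of order type at most `o`, as witnessed by a strictly increasing
ordinal-valued rank function on `S` with values below `o`. -/
def OrderTypeLE [Preorder X] (S : Set X) (o : Ordinal.{u}) : Prop :=
  ∃ F : X → Ordinal.{u}, StrictMonoOn F S ∧ MapsTo F S (Iio o)

/-- `S` contains an increasing copy of the ordinal `o`; for a well-ordered `S` this says that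
its order type is at least `o`. -/
def OrderTypeGE [Preorder X] (S : Set X) (o : Ordinal.{u}) : Prop :=
  ∃ h : Ordinal.{u} → X, StrictMonoOn h (Iio o) ∧ MapsTo h (Iio o) S

lemma OrderTypeLE.isWF [Preorder X] {S : Set X} {o : Ordinal.{u}} (h : OrderTypeLE S o) :
    S.IsWF := by
  obtain ⟨F, hF, -⟩ := h
  exact Subrelation.wf (r := InvImage (· < ·) fun x : S => F x)
    (fun {x y} hxy => hF x.2 y.2 hxy) (InvImage.wf _ wellFounded_lt)

lemma OrderTypeLE.setOrderType_le [LinearOrder X] {S : Set X} {o : Ordinal.{u}}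
    (h : OrderTypeLE S o) : setOrderType S ≤ o := by
  have hS : S.IsWF := h.isWF
  have : WellFoundedLT S := ⟨hS⟩
  obtain ⟨F, hF, hFo⟩ := h
  rw [setOrderType, dif_pos hS, ← type_toType o, type_le_iff']
  exact ⟨(OrderEmbedding.ofStrictMono (fun x : S => ToType.mk ⟨F x, hFo x.2⟩)
    fun x y hxy => ToType.mk.lt_iff_lt.2 (hF x.2 y.2 hxy)).ltEmbedding⟩

lemma OrderTypeGE.le_setOrderType [LinearOrder X] {S : Set X} {o : Ordinal.{u}}
    (h : OrderTypeGE S o) (hS : S.IsWF) : o ≤ setOrderType S := by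
  have : WellFoundedLT S := ⟨hS⟩
  obtain ⟨h, hmono, hmem⟩ := h
  rw [setOrderType, dif_pos hS, ← type_toType o, type_le_iff']
  exact ⟨(OrderEmbedding.ofStrictMono
    (fun a : o.ToType => (⟨h (ToType.mk.symm a), hmem (ToType.mk.symm a).2⟩ : S))
    fun a b hab => hmono (ToType.mk.symm a).2 (ToType.mk.symm b).2
      (ToType.mk.symm.lt_iff_lt.2 hab)).ltEmbedding⟩

variable {Y : Type u} [Preorder X] [Preorder Y]

lemma OrderTypeLE.of_strictMonoOn {S : Set X} {T : Set Y} {o : Ordinal.{u}} {g : X → Y}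
    (h : OrderTypeLE T o) (hg : StrictMonoOn g S) (hmaps : MapsTo g S T) : OrderTypeLE S o := by
  obtain ⟨F, hF, hFo⟩ := h
  exact ⟨F ∘ g, hF.comp hg hmaps, hFo.comp hmaps⟩

lemma OrderTypeLE.subset {S T : Set X} {o : Ordinal.{u}} (h : OrderTypeLE T o) (hST : S ⊆ T) :
    OrderTypeLE S o :=
  h.of_strictMonoOn strictMonoOn_id hST

lemma OrderTypeLE.empty (o : Ordinal.{u}) : OrderTypeLE (∅ : Set X) o :=
  ⟨fun _ => 0, by simp [StrictMonoOn], mapsTo_empty _ _⟩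

open scoped Classical in
lemma OrderTypeLE.insert {S : Set X} {o : Ordinal.{u}} {a : X} (h : OrderTypeLE S o)
    (ha : ∀ x ∈ S, x < a) : OrderTypeLE (insert a S) (o + 1) := by
  obtain ⟨F, hF, hFo⟩ := h
  have hSa : EqOn (Function.update F a o) F S := fun x hx =>
    Function.update_of_ne (ha x hx).ne _ _
  refine ⟨Function.update F a o, ?_, ?_⟩
  · rintro x (rfl | hx) y (rfl | hy) hxy
    · exact (lt_irrefl _ hxy).elim
    · exact (lt_asymm hxy (ha y hy)).elim
    · rw [hSa hx, Function.update_self]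
      exact hFo hx
    · rw [hSa hx, hSa hy]
      exact hF hx hy hxy
  · rintro x (rfl | hx)
    · simp
    · rw [mem_Iio, hSa hx]
      exact (hFo hx).trans (lt_add_one o)

-- The fibres are stacked: the rank of `x` is its rank in its own fibre plus the bounds of all
-- lower fibres, and these finite sums stay below the additively indecomposable `o`.
lemma OrderTypeLE.of_monotoneOn_fiber {S : Set X} {o : Ordinal.{u}}
    (ho : IsPrincipal (· + ·) o) {f : X → ℕ} (hf : MonotoneOn f S)
    (h : ∀ n, ∃ o' < o, OrderTypeLE {x ∈ S | f x = n} o') : OrderTypeLE S o := by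
  choose bound hbound F hF hFbound using h
  let offset : ℕ → Ordinal.{u} := Nat.rec 0 fun n p => p + bound n
  have offset_mono : Monotone offset := monotone_nat_of_le_succ fun n => le_self_add
  have offset_lt (n : ℕ) : offset n < o := by
    induction n with
    | zero => exact pos_of_gt (hbound 0)
    | succ n ih => exact ho ih (hbound n)
  have rank_lt {x : X} (hx : x ∈ S) : offset (f x) + F (f x) x < offset (f x + 1) := by
    have : F (f x) x < bound (f x) := hFbound (f x) ⟨hx, rfl⟩
    exact (add_lt_add_iff_left _).2 this
  refine ⟨fun x => offset (f x) + F (f x) x, fun x hx y hy hxy => ?_, fun x hx =>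
    (rank_lt hx).trans (offset_lt (f x + 1))⟩
  rcases (hf hx hy hxy.le).lt_or_eq with hlt | heq
  · calc offset (f x) + F (f x) x < offset (f x + 1) := rank_lt hx
      _ ≤ offset (f y) := offset_mono hlt
      _ ≤ offset (f y) + F (f y) y := le_self_add
  · simp only [heq, add_lt_add_iff_left]
    exact hF (f y) ⟨hx, heq⟩ ⟨hy, rfl⟩ hxy

lemma OrderTypeGE.map {S : Set X} {T : Set Y} {o : Ordinal.{u}} {g : X → Y}
    (h : OrderTypeGE S o) (hg : StrictMonoOn g S) (hmaps : MapsTo g S T) : OrderTypeGE T o := by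
  obtain ⟨h, hmono, hmem⟩ := h
  exact ⟨g ∘ h, hg.comp hmono hmem, hmaps.comp hmem⟩

lemma OrderTypeGE.superset {S T : Set X} {o : Ordinal.{u}} (h : OrderTypeGE S o) (hST : S ⊆ T) :
    OrderTypeGE T o :=
  h.map strictMonoOn_id hST

lemma orderTypeGE_one_iff {S : Set X} : OrderTypeGE S 1 ↔ S.Nonempty := by
  constructor
  · rintro ⟨h, -, hmem⟩
    exact ⟨h 0, hmem (mem_Iio.2 zero_lt_one)⟩
  · rintro ⟨x, hx⟩
    refine ⟨fun _ => x, fun a ha b hb hab => ?_, fun _ _ => hx⟩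
    rw [mem_Iio, Order.lt_one_iff] at ha hb
    exact absurd hab (by simp [ha, hb])

lemma orderTypeGE_mul_omega0_iff {S : Set X} {o : Ordinal.{u}} :
    OrderTypeGE S (o * ω) ↔ ∃ B : ℕ → Set X, (∀ n, B n ⊆ S) ∧ (∀ n, OrderTypeGE (B n) o) ∧
      ∀ ⦃m n⦄, m < n → ∀ x ∈ B m, ∀ y ∈ B n, x < y := by
  have lt_block {m n : ℕ} (hmn : m < n) {a : Ordinal.{u}} (ha : a < o) (b : Ordinal.{u}) :
      o * m + a < o * n + b :=
    (lt_mul_iff.2 ⟨m, Nat.cast_lt.2 hmn, a, ha, rfl⟩).trans_le le_self_add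
  constructor
  · rintro ⟨h, hmono, hmem⟩
    have mem_Iio_mul {n : ℕ} {a : Ordinal.{u}} (ha : a < o) : o * n + a ∈ Iio (o * ω) :=
      lt_mul_iff.2 ⟨n, natCast_lt_omega0 n, a, ha, rfl⟩
    refine ⟨fun n => (fun a => h (o * n + a)) '' Iio o, ?_, fun n =>
      ⟨fun a => h (o * n + a), fun a ha b hb hab =>
        hmono (mem_Iio_mul ha) (mem_Iio_mul hb) ((add_lt_add_iff_left _).2 hab),
        mapsTo_image _ _⟩, ?_⟩
    · rintro n _ ⟨a, ha, rfl⟩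
      exact hmem (mem_Iio_mul ha)
    · rintro m n hmn _ ⟨a, ha, rfl⟩ _ ⟨b, hb, rfl⟩
      exact hmono (mem_Iio_mul ha) (mem_Iio_mul hb) (lt_block hmn ha b)
  · rintro ⟨B, hBS, hB, hlt⟩
    choose h hmono hmem using hB
    have division (a : Ordinal.{u}) (ha : a < o * ω) :
        ∃ (n : ℕ) (r : Ordinal.{u}), r < o ∧ a = o * n + r := by
      obtain ⟨q, hq, r, hr, rfl⟩ := lt_mul_iff.1 ha
      obtain ⟨n, rfl⟩ := lt_omega0.1 hq
      exact ⟨n, r, hr, rfl⟩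
    choose! block rem hrem hdiv using division
    refine ⟨fun a => h (block a) (rem a), fun a ha b hb hab => ?_, fun a ha =>
      hBS _ (hmem _ (hrem a ha))⟩
    rcases lt_trichotomy (block a) (block b) with hlt' | heq | hgt
    · exact hlt hlt' _ (hmem _ (hrem a ha)) _ (hmem _ (hrem b hb))
    · rw [hdiv a ha, hdiv b hb, heq, add_lt_add_iff_left] at hab
      simp only [heq]
      exact hmono _ (hrem a ha) (hrem b hb) hab
    · rw [hdiv a ha, hdiv b hb] at hab
      exact (lt_asymm hab (lt_block hgt (hrem b hb) _)).elim

lemma OrderTypeGE.exists_of_iUnion {ι : Type v} [Finite ι] {A : ι → Set X} {k : ℕ}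
    (h : OrderTypeGE (⋃ i, A i) (ω ^ k)) : ∃ i, OrderTypeGE (A i) (ω ^ k) := by
  induction k generalizing A with
  | zero =>
    simp only [pow_zero, orderTypeGE_one_iff, nonempty_iUnion] at h ⊢
    exact h
  | succ k ih =>
    rw [pow_succ] at h
    obtain ⟨B, hBA, hB, hlt⟩ := orderTypeGE_mul_omega0_iff.1 h
    have block (n : ℕ) : ∃ i, OrderTypeGE (B n ∩ A i) (ω ^ k) :=
      ih (by rw [← inter_iUnion, inter_eq_left.2 (hBA n)]; exact hB n)
    choose i hi using block
    obtain ⟨i₀, hinf⟩ := Finite.exists_infinite_fiber i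
    obtain ⟨s, hs, his⟩ := extraction_of_frequently_atTop
      (Nat.frequently_atTop_iff_infinite.2 (infinite_coe_iff.1 hinf))
    refine ⟨i₀, ?_⟩
    rw [pow_succ]
    exact orderTypeGE_mul_omega0_iff.2 ⟨fun n => B (s n) ∩ A i₀, fun n => inter_subset_right,
      fun n => his n ▸ hi (s n), fun m n hmn x hx y hy => hlt (hs hmn) x hx.1 y hy.1⟩

end OrderType

/-! ### Binary weight -/

lemma sum_digits_add_le (p : ℕ) [hp : Fact p.Prime] (a b : ℕ) :
    (p.digits (a + b)).sum ≤ (p.digits a).sum + (p.digits b).sum := by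
  -- Legendre's formula `(p - 1) * v_p (n!) = n - digit sum` turns `a! * b! ∣ (a + b)!` into this.
  have hval : padicValNat p a ! + padicValNat p b ! ≤ padicValNat p (a + b)! := by
    rw [← padicValNat.mul a.factorial_ne_zero b.factorial_ne_zero]
    exact (padicValNat_dvd_iff_le (Nat.factorial_ne_zero _)).1
      (pow_padicValNat_dvd.trans (Nat.factorial_mul_factorial_dvd_factorial_add a b))
  have := Nat.mul_le_mul_left (p - 1) hval
  rw [mul_add, sub_one_mul_padicValNat_factorial, sub_one_mul_padicValNat_factorial,
    sub_one_mul_padicValNat_factorial] at this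
  have := Nat.digit_sum_le p a
  have := Nat.digit_sum_le p b
  have := Nat.digit_sum_le p (a + b)
  omega

lemma binaryWeight_add_le (a b : ℕ) : binaryWeight (a + b) ≤ binaryWeight a + binaryWeight b :=
  sum_digits_add_le 2 a b

lemma binaryWeight_one : binaryWeight 1 = 1 := by simp [binaryWeight]

lemma binaryWeight_two_mul (n : ℕ) : binaryWeight (2 * n) = binaryWeight n := by
  rcases n.eq_zero_or_pos with rfl | hn
  · rfl
  · simp [binaryWeight, Nat.digits_base_mul one_lt_two hn]

lemma binaryWeight_add_two_pow {r e : ℕ} (hr : r < 2 ^ e) :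
    binaryWeight (r + 2 ^ e) = binaryWeight r + 1 := by
  have hlen : (Nat.digits 2 r).length ≤ e := (Nat.digits_length_le_iff one_lt_two r).2 hr
  have := Nat.digits_append_zeroes_append_digits (k := e - (Nat.digits 2 r).length) (n := r)
    one_lt_two one_pos
  rw [Nat.add_sub_cancel' hlen, mul_one] at this
  rw [binaryWeight, binaryWeight, ← this]
  simp

lemma exists_eq_add_two_pow_log {n : ℕ} (hn : n ≠ 0) :
    ∃ r, n = r + 2 ^ Nat.log 2 n ∧ binaryWeight n = binaryWeight r + 1 := by
  obtain ⟨r, hr⟩ := Nat.exists_eq_add_of_le' (Nat.pow_log_le_self 2 hn)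
  have hlt : n < 2 ^ Nat.log 2 n * 2 := Nat.lt_pow_succ_log_self one_lt_two n
  have hr' : r < 2 ^ Nat.log 2 n := by omega
  exact ⟨r, hr, by rw [← binaryWeight_add_two_pow hr', ← hr]⟩

/-! ### Addition chains -/

/-- `n` has an addition chain of length `r`. -/
def HasChain (n r : ℕ) : Prop :=
  ∃ c, IsAdditionChainFor c n ∧ c.length = r + 1

lemma IsAdditionChain.concat {c : List ℕ} (hc : IsAdditionChain c) {i j : ℕ}
    (hi : i < c.length) (hj : j < c.length) :
    IsAdditionChain (c ++ [c.getD i 0 + c.getD j 0]) := by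
  have getD_old {k : ℕ} (hk : k < c.length) (l : List ℕ) : (c ++ l).getD k 0 = c.getD k 0 :=
    List.getD_append _ _ _ _ hk
  refine ⟨by rw [getD_old (by omega)]; exact hc.1, fun k hk hkl => ?_⟩
  rcases Nat.lt_or_ge k c.length with hlt | hge
  · obtain ⟨i, j, hik, hjk, hsum⟩ := hc.2 k hk hlt
    exact ⟨i, j, hik, hjk, by
      rw [getD_old hlt, getD_old (hik.trans hlt), getD_old (hjk.trans hlt), hsum]⟩
  · obtain rfl : k = c.length := by
      rw [List.length_append, List.length_singleton] at hkl
      omega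
    refine ⟨i, j, hi, hj, ?_⟩
    rw [getD_old hi, getD_old hj, List.getD_append_right _ _ _ _ le_rfl]
    simp

lemma hasChain_one : HasChain 1 0 :=
  ⟨[1], ⟨⟨rfl, fun k hk hk' => absurd hk' (by simpa using hk.ne')⟩, rfl⟩, rfl⟩

lemma HasChain.two_mul {n r : ℕ} (h : HasChain n r) : HasChain (2 * n) (r + 1) := by
  obtain ⟨c, ⟨hc, hn⟩, hlen⟩ := h
  refine ⟨_, ⟨hc.concat (i := r) (j := r) (by omega) (by omega), ?_⟩, by simp [hlen]⟩
  rw [hlen, Nat.add_sub_cancel] at hn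
  rw [List.length_append, List.length_singleton, Nat.add_sub_cancel,
    List.getD_append_right _ _ _ _ le_rfl, Nat.sub_self, List.getD_cons_zero, hn, Nat.two_mul]

lemma HasChain.add_one {n r : ℕ} (h : HasChain n r) : HasChain (n + 1) (r + 1) := by
  obtain ⟨c, ⟨hc, hn⟩, hlen⟩ := h
  refine ⟨_, ⟨hc.concat (i := r) (j := 0) (by omega) (by omega), ?_⟩, by simp [hlen]⟩
  rw [hlen, Nat.add_sub_cancel] at hn
  rw [List.length_append, List.length_singleton, Nat.add_sub_cancel,
    List.getD_append_right _ _ _ _ le_rfl, Nat.sub_self, List.getD_cons_zero, hn, hc.1]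

lemma HasChain.two_pow_mul {n r : ℕ} (h : HasChain n r) (b : ℕ) :
    HasChain (2 ^ b * n) (r + b) := by
  induction b with
  | zero => simpa using h
  | succ b ih =>
    rw [pow_succ', mul_assoc]
    exact ih.two_mul

lemma HasChain.addChainLength_le {n r : ℕ} (h : HasChain n r) : addChainLength n ≤ r :=
  Nat.sInf_le h

lemma hasChain_addChainLength {n : ℕ} (hn : 0 < n) : HasChain n (addChainLength n) := by
  have hex : ∃ r, HasChain n r := by
    induction n, hn using Nat.le_induction with
    | base => exact ⟨0, hasChain_one⟩
    | succ n _ ih => exact ih.imp' (· + 1) fun r hr => hr.add_one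
  exact Nat.sInf_mem hex

-- The exponent `4` is chosen so that `2 * φ ^ 4 < 16` for the golden ratio `φ`: the doubling of `w`
-- is paid for by the Fibonacci growth of `m`. One step suffices if `m₁ / m₀ ≥ 3 / 2`, since
-- `2 * (5 / 3) ^ 4 < 16`; otherwise two steps do, since `4 * (5 / 2) ^ 4 < 16 ^ 2`.
lemma weight_mul_pow_four_le_of_two_steps {k w₀ w₁ w₂ m₀ m₁ m₂ : ℕ} (hw₁ : w₁ ≤ 2 * w₀)
    (hw₂ : w₂ ≤ 2 * w₁) (hm : m₂ ≤ m₁ + m₀) (h₀ : w₀ * m₀ ^ 4 ≤ 16 ^ k)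
    (h₁ : w₁ * m₁ ^ 4 ≤ 16 ^ (k + 1)) : w₂ * m₂ ^ 4 ≤ 16 ^ (k + 2) := by
  rcases Nat.le_total (3 * m₀) (2 * m₁) with hratio | hratio
  · have hm₂ : 3 * m₂ ≤ 5 * m₁ := by omega
    have : 81 * (w₂ * m₂ ^ 4) ≤ 81 * 16 ^ (k + 2) := calc
      81 * (w₂ * m₂ ^ 4) = w₂ * (3 * m₂) ^ 4 := by ring
      _ ≤ (2 * w₁) * (5 * m₁) ^ 4 := Nat.mul_le_mul hw₂ (Nat.pow_le_pow_left hm₂ 4)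
      _ = 1250 * (w₁ * m₁ ^ 4) := by ring
      _ ≤ 1250 * 16 ^ (k + 1) := by gcongr
      _ ≤ 81 * 16 ^ (k + 2) := by rw [pow_succ _ (k + 1)]; omega
    omega
  · have hm₂ : 2 * m₂ ≤ 5 * m₀ := by omega
    have hw : w₂ ≤ 2 * (2 * w₀) := by omega
    have : 16 * (w₂ * m₂ ^ 4) ≤ 16 * 16 ^ (k + 2) := calc
      16 * (w₂ * m₂ ^ 4) = w₂ * (2 * m₂) ^ 4 := by ring
      _ ≤ (2 * (2 * w₀)) * (5 * m₀) ^ 4 := Nat.mul_le_mul hw (Nat.pow_le_pow_left hm₂ 4)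
      _ = 2500 * (w₀ * m₀ ^ 4) := by ring
      _ ≤ 2500 * 16 ^ k := by gcongr
      _ ≤ 16 * 16 ^ (k + 2) := by rw [pow_add]; omega
    omega

lemma partialSups_add_one_le_add {M : Type*} [AddCommMonoid M] [SemilatticeSup M]
    [CanonicallyOrderedAdd M] {f : ℕ → M} {i j k l : ℕ} (hi : i ≤ k) (hj : j ≤ l)
    (h : f (k + 1) ≤ f i + f j) :
    partialSups f (k + 1) ≤ partialSups f k + partialSups f l := by
  rw [partialSups_add_one]
  exact sup_le le_self_add
    (h.trans (add_le_add (le_partialSups_of_le f hi) (le_partialSups_of_le f hj)))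

lemma partialSups_weight_mul_pow_four_le {a : ℕ → ℕ} {r : ℕ} (h0 : a 0 = 1)
    (hsum : ∀ k < r, ∃ i ≤ k, ∃ j ≤ k, a (k + 1) = a i + a j) {k : ℕ} (hk : k ≤ r) :
    partialSups (binaryWeight ∘ a) k * partialSups a k ^ 4 ≤ 16 ^ k := by
  set M := partialSups a
  set W := partialSups (binaryWeight ∘ a)
  have W_step {k : ℕ} (hk : k < r) : W (k + 1) ≤ 2 * W k := by
    obtain ⟨i, hi, j, hj, hij⟩ := hsum k hk
    rw [Nat.two_mul]
    refine partialSups_add_one_le_add hi hj ?_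
    rw [Function.comp_apply, hij]
    exact binaryWeight_add_le _ _
  have M_step {k i j : ℕ} (hi : i ≤ k + 1) (hj : j ≤ k + 1) (hne : i ≤ k ∨ j ≤ k)
      (hij : a (k + 2) = a i + a j) : M (k + 2) ≤ M (k + 1) + M k := by
    rcases hne with hi' | hj'
    · exact partialSups_add_one_le_add hj hi' (hij.trans (add_comm _ _)).le
    · exact partialSups_add_one_le_add hi hj' hij.le
  have doubling {k : ℕ} (h : a (k + 1) = 2 * a k) (ih : W k * M k ^ 4 ≤ 16 ^ k) :
      W (k + 1) * M (k + 1) ^ 4 ≤ 16 ^ (k + 1) := by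
    have hW : W (k + 1) ≤ W k := by
      rw [partialSups_add_one, Function.comp_apply, h, binaryWeight_two_mul]
      exact sup_le le_rfl (le_partialSups (binaryWeight ∘ a) k)
    have hM : M (k + 1) ≤ M k + M k :=
      partialSups_add_one_le_add le_rfl le_rfl (h.trans (Nat.two_mul _)).le
    calc W (k + 1) * M (k + 1) ^ 4 ≤ W k * (M k + M k) ^ 4 := by gcongr
      _ = 16 * (W k * M k ^ 4) := by ring
      _ ≤ 16 * 16 ^ k := by gcongr
      _ = 16 ^ (k + 1) := (pow_succ' 16 k).symm
  induction k using Nat.twoStepInduction with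
  | zero => simp [M, W, h0, binaryWeight_one]
  | one =>
    obtain ⟨i, hi, j, hj, hij⟩ := hsum 0 hk
    obtain ⟨rfl, rfl⟩ : i = 0 ∧ j = 0 := by omega
    exact doubling (by omega) (by simp [M, W, h0, binaryWeight_one])
  | more k ih₀ ih₁ =>
    obtain ⟨i, hi, j, hj, hij⟩ := hsum (k + 1) hk
    by_cases hd : i = k + 1 ∧ j = k + 1
    · obtain ⟨rfl, rfl⟩ := hd
      exact doubling (by omega) (ih₁ (by omega))
    · exact weight_mul_pow_four_le_of_two_steps (W_step (by omega)) (W_step (by omega))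
        (M_step hi hj (by omega) hij) (ih₀ (by omega)) (ih₁ (by omega))

lemma HasChain.binaryWeight_mul_pow_four_le {n r : ℕ} (h : HasChain n r) :
    binaryWeight n * n ^ 4 ≤ 16 ^ r := by
  obtain ⟨c, ⟨⟨h0, hsum⟩, hn⟩, hlen⟩ := h
  rw [hlen, Nat.add_sub_cancel] at hn
  have hbound := partialSups_weight_mul_pow_four_le (a := fun i => c.getD i 0) h0 (fun k hk => by
    obtain ⟨i, j, hi, hj, hij⟩ := hsum (k + 1) k.succ_pos (by omega)
    exact ⟨i, by omega, j, by omega, hij⟩) (le_refl r)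
  calc binaryWeight n * n ^ 4 ≤ _ := by
        rw [← hn]
        gcongr
        · exact le_partialSups (binaryWeight ∘ fun i => c.getD i 0) r
        · exact le_partialSups (fun i => c.getD i 0) r
    _ ≤ 16 ^ r := hbound

lemma HasChain.le_two_pow {n r : ℕ} (h : HasChain n r) : n ≤ 2 ^ r := by
  rcases eq_or_ne n 0 with rfl | hn
  · exact Nat.zero_le _
  obtain ⟨s, -, hs⟩ := exists_eq_add_two_pow_log hn
  refine le_of_pow_le_pow_left₀ four_ne_zero (Nat.zero_le _) ?_
  calc n ^ 4 ≤ binaryWeight n * n ^ 4 := Nat.le_mul_of_pos_left _ (by omega)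
    _ ≤ 16 ^ r := h.binaryWeight_mul_pow_four_le
    _ = (2 ^ r) ^ 4 := by rw [← pow_mul, mul_comm, pow_mul]; norm_num

lemma HasChain.binaryWeight_le {n e j : ℕ} (h : HasChain n (e + j)) (he : 2 ^ e ≤ n) :
    binaryWeight n ≤ 16 ^ j := by
  refine Nat.le_of_mul_le_mul_left ?_ (Nat.pow_pos (n := e) (show 0 < 16 by norm_num))
  calc 16 ^ e * binaryWeight n = binaryWeight n * (2 ^ e) ^ 4 := by
        rw [← pow_mul, mul_comm e, pow_mul, mul_comm]; norm_num
    _ ≤ binaryWeight n * n ^ 4 := by gcongr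
    _ ≤ 16 ^ (e + j) := h.binaryWeight_mul_pow_four_le
    _ = 16 ^ e * 16 ^ j := pow_add 16 e j

/-! ### Dyadic numbers with few binary digits -/

/-- The nonnegative dyadic rationals having at most `K` nonzero binary digits. -/
def sparseDyadic (K : ℕ) : Set ℝ :=
  {x | ∃ m e : ℕ, binaryWeight m ≤ K ∧ x = m / 2 ^ e}

lemma eq_zero_of_mem_sparseDyadic_zero {x : ℝ} (hx : x ∈ sparseDyadic 0) : x = 0 := by
  obtain ⟨m, e, hm, rfl⟩ := hx
  have : m = 0 := by
    by_contra hm0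
    obtain ⟨s, -, hs⟩ := exists_eq_add_two_pow_log hm0
    omega
  simp [this]

lemma intLog_natCast_div_two_pow {m : ℕ} (hm : m ≠ 0) (e : ℕ) :
    Int.log 2 ((m : ℝ) / 2 ^ e) = Nat.log 2 m - e := by
  have hpos : (0 : ℝ) < m / 2 ^ e := by positivity
  have two_zpow (a : ℕ) : (2 : ℝ) ^ ((a : ℤ) - e) = 2 ^ a / 2 ^ e := by
    rw [zpow_sub₀ two_ne_zero, zpow_natCast, zpow_natCast]
  refine le_antisymm (Int.lt_add_one_iff.1 ?_) ?_
  · rw [← Int.lt_zpow_iff_log_lt one_lt_two hpos, sub_add_eq_add_sub, Nat.cast_ofNat]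
    refine lt_of_lt_of_eq ?_ (two_zpow (Nat.log 2 m + 1)).symm
    gcongr
    exact_mod_cast Nat.lt_pow_succ_log_self one_lt_two m
  · rw [← Int.zpow_le_iff_le_log one_lt_two hpos, Nat.cast_ofNat, two_zpow]
    gcongr
    exact_mod_cast Nat.pow_log_le_self 2 hm

-- Scaling the leading binary digit to the units place and deleting it.
lemma two_zpow_neg_log_mul_sub_one_mem_sparseDyadic {K : ℕ} {x : ℝ}
    (hx : x ∈ sparseDyadic (K + 1)) (hpos : 0 < x) :
    2 ^ (-Int.log 2 x) * x - 1 ∈ sparseDyadic K := by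
  obtain ⟨m, e, hm, rfl⟩ := hx
  have hm0 : m ≠ 0 := by
    rintro rfl
    simp at hpos
  obtain ⟨s, hs, hweight⟩ := exists_eq_add_two_pow_log hm0
  refine ⟨s, Nat.log 2 m, by omega, ?_⟩
  have hs' : (m : ℝ) = s + 2 ^ Nat.log 2 m := by exact_mod_cast hs
  rw [intLog_natCast_div_two_pow hm0, neg_sub, zpow_sub₀ two_ne_zero, zpow_natCast, zpow_natCast,
    eq_sub_of_add_eq hs'.symm]
  field_simp

lemma two_zpow_neg_log_mul_sub_one_mem_Ico {x : ℝ} (hpos : 0 < x) :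
    2 ^ (-Int.log 2 x) * x - 1 ∈ Ico (0 : ℝ) 1 := by
  have hlower : (2 : ℝ) ^ Int.log 2 x ≤ x := Int.zpow_log_le_self one_lt_two hpos
  have hupper : x < (2 : ℝ) ^ (Int.log 2 x + 1) := Int.lt_zpow_succ_log_self one_lt_two x
  have : (0 : ℝ) < 2 ^ Int.log 2 x := by positivity
  rw [zpow_add_one₀ two_ne_zero] at hupper
  rw [zpow_neg, inv_mul_eq_div, mem_Ico, sub_nonneg, sub_lt_iff_lt_add, one_le_div this,
    div_lt_iff₀ this]
  constructor <;> linarith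

lemma omega0_pow_add_one_lt (K : ℕ) : (ω ^ K + 1 : Ordinal.{u}) < ω ^ (K + 1) := by
  rw [← opow_natCast ω (K + 1)]
  refine isPrincipal_add_omega0_opow _ ?_ ?_
  · rw [← opow_natCast, opow_lt_opow_iff_right one_lt_omega0]
    exact_mod_cast K.lt_succ_self
  · exact one_lt_opow.2 ⟨one_lt_omega0, by simp⟩

-- The fibres are taken with respect to the position of the leading binary digit.
lemma orderTypeLE_neg_sparseDyadic (K : ℕ) :
    OrderTypeLE (-(sparseDyadic K ∩ Ioo 0 2)) (ω ^ K) := by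
  induction K with
  | zero =>
    refine (OrderTypeLE.empty _).subset fun y hy => ?_
    exact hy.2.1.ne' (eq_zero_of_mem_sparseDyadic_zero hy.1)
  | succ K ih =>
    have log_nonpos {y : ℝ} (hy : -y ∈ Ioo 0 2) : Int.log 2 (-y) ≤ 0 := by
      refine Int.lt_add_one_iff.1 ((Int.lt_zpow_iff_log_lt one_lt_two hy.1).1 ?_)
      simpa using hy.2
    rw [← opow_natCast]
    refine OrderTypeLE.of_monotoneOn_fiber (isPrincipal_add_omega0_opow _)
      (f := fun y => (-Int.log 2 (-y)).toNat) (fun y _ y' hy' hyy' => ?_) fun b =>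
      ⟨ω ^ K + 1, by rw [opow_natCast]; exact omega0_pow_add_one_lt K, ?_⟩
    · exact Int.toNat_le_toNat (neg_le_neg (Int.log_mono_right hy'.2.1 (neg_le_neg hyy')))
    · refine (ih.insert (a := 0) fun y hy => neg_pos.1 hy.2.1).of_strictMonoOn
        (g := fun y => -(2 ^ b * -y - 1)) (fun y _ y' _ hyy' => ?_) ?_
      · have : (2 : ℝ) ^ b * y < 2 ^ b * y' := by gcongr
        linarith
      · rintro y ⟨⟨hsparse, hy⟩, rfl⟩
        set x := -y
        have hlog : ((-Int.log 2 x).toNat : ℤ) = -Int.log 2 x :=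
          Int.toNat_of_nonneg (neg_nonneg.2 (log_nonpos hy))
        dsimp only
        rw [← zpow_natCast, hlog]
        obtain ⟨h0, h1⟩ := two_zpow_neg_log_mul_sub_one_mem_Ico hy.1
        rcases h0.eq_or_lt with heq | hpos
        · exact Or.inl (by rw [← heq, neg_zero])
        · refine Or.inr ?_
          rw [Set.mem_neg, neg_neg]
          exact ⟨two_zpow_neg_log_mul_sub_one_mem_sparseDyadic hsparse hy.1, hpos, by linarith⟩

/-! ### Ratios attained by addition chains -/

/-- The ratios `m / 2 ^ e ≥ 1` for which `m` has an addition chain of length `e + j`. -/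
def chainRatio (j : ℕ) : Set ℝ :=
  {x | ∃ m e : ℕ, 2 ^ e ≤ m ∧ HasChain m (e + j) ∧ x = m / 2 ^ e}

lemma one_le_of_mem_chainRatio {j : ℕ} {x : ℝ} (hx : x ∈ chainRatio j) : 1 ≤ x := by
  obtain ⟨m, e, hem, -, rfl⟩ := hx
  rw [one_le_div (by positivity)]
  exact_mod_cast hem

lemma chainRatio_subset_sparseDyadic (j : ℕ) : chainRatio j ⊆ sparseDyadic (16 ^ j) := by
  rintro _ ⟨m, e, hem, hchain, rfl⟩
  exact ⟨m, e, hchain.binaryWeight_le hem, rfl⟩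

lemma one_mem_chainRatio_zero : 1 ∈ chainRatio 0 :=
  ⟨1, 0, le_rfl, hasChain_one, by simp⟩

lemma eventually_add_pow_mem_chainRatio {j : ℕ} {x : ℝ} (hx : x ∈ chainRatio j) :
    ∀ᶠ e : ℕ in atTop, x + (1 / 2) ^ e ∈ chainRatio (j + 1) := by
  obtain ⟨m, e₀, hem, hchain, rfl⟩ := hx
  filter_upwards [eventually_ge_atTop e₀] with e he
  obtain ⟨b, rfl⟩ := Nat.exists_eq_add_of_le he
  refine ⟨2 ^ b * m + 1, e₀ + b, ?_, ?_, ?_⟩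
  · calc 2 ^ (e₀ + b) = 2 ^ b * 2 ^ e₀ := by rw [add_comm, pow_add]
      _ ≤ 2 ^ b * m := Nat.mul_le_mul_left _ hem
      _ ≤ 2 ^ b * m + 1 := Nat.le_succ _
  · convert (hchain.two_pow_mul b).add_one using 1
    ring
  · push_cast
    rw [one_div_pow, pow_add]
    field_simp

-- A ratio `x` is approached from above by the ratios `x + 2⁻ᵉ`, which cost one more step;
-- disjoint intervals to the right of these carry the copies of `ω ^ k`.
lemma orderTypeGE_neg_chainRatio {j : ℕ} {x ε : ℝ} (hx : x ∈ chainRatio j) (hε : 0 < ε) (k : ℕ) :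
    OrderTypeGE (-(chainRatio (j + k) ∩ Ico x (x + ε))) (ω ^ k) := by
  induction k generalizing j x ε with
  | zero =>
    rw [pow_zero, orderTypeGE_one_iff]
    exact ⟨-x, by simpa [hε] using hx⟩
  | succ k ih =>
    have pow_lt : ∀ᶠ e : ℕ in atTop, (1 / 2 : ℝ) ^ e < ε / 2 :=
      (tendsto_pow_atTop_nhds_zero_of_lt_one (by norm_num) (by norm_num)).eventually_lt_const
        (half_pos hε)
    obtain ⟨e₀, he₀⟩ := eventually_atTop.1 ((eventually_add_pow_mem_chainRatio hx).and pow_lt)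
    set δ : ℕ → ℝ := fun n => (1 / 2) ^ (e₀ + n) with hδ
    have δ_pos (n : ℕ) : 0 < δ n := by positivity
    have δ_lt {m n : ℕ} (hmn : m < n) : 2 * δ n ≤ δ m := calc
      2 * δ n ≤ 2 * δ (m + 1) := by
        gcongr 2 * ?_
        exact pow_le_pow_of_le_one (by norm_num) (by norm_num) (by omega)
      _ = δ m := by simp only [hδ, ← add_assoc, pow_succ]; ring
    rw [pow_succ]
    refine orderTypeGE_mul_omega0_iff.2
      ⟨fun n => -(chainRatio (j + 1 + k) ∩ Ico (x + δ n) (x + δ n + δ n)), fun n y hy => ?_,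
        fun n => ih (he₀ (e₀ + n) (by omega)).1 (δ_pos n), fun m n hmn y hy z hz => ?_⟩
    · obtain ⟨hmem, hlower, hupper⟩ := hy
      have : δ n < ε / 2 := (he₀ (e₀ + n) (by omega)).2
      exact ⟨by rwa [add_right_comm, add_assoc] at hmem, by linarith [δ_pos n], by linarith⟩
    · have := hy.2.1
      have := hz.2.2
      linarith [δ_lt hmn]

/-! ### The defect set -/

/-- `𝒟^ℓ`: the set of all addition chain defect values. -/
def addDefectSet : Set ℝ :=
  {d | ∃ n : ℕ, 0 < n ∧ d = addDefect n}

lemma addDefect_eq {n e c : ℕ} (hn : 0 < n) (h : addChainLength n = e + c) :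
    addDefect n = c - Real.logb 2 (n / 2 ^ e) := by
  have : (n : ℝ) ≠ 0 := by positivity
  rw [addDefect, h, Real.logb_div this (by positivity), Real.logb_pow,
    Real.logb_self_eq_one one_lt_two]
  push_cast
  ring

lemma exists_addChainLength_eq_add {n e : ℕ} (he : 2 ^ e ≤ n) : ∃ c, addChainLength n = e + c :=
  have hn : 0 < n := (Nat.two_pow_pos e).trans_le he
  Nat.exists_eq_add_of_le <| (Nat.pow_le_pow_iff_right one_lt_two).1 <|
    he.trans (hasChain_addChainLength hn).le_two_pow

lemma two_rpow_ceil_sub_mem_chainRatio {d : ℝ} (hd : d ∈ addDefectSet) :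
    (2 : ℝ) ^ (⌈d⌉₊ - d) ∈ chainRatio ⌈d⌉₊ ∩ Iio 2 := by
  obtain ⟨n, hn, rfl⟩ := hd
  have hpow : 2 ^ Nat.log 2 n ≤ n := Nat.pow_log_le_self 2 hn.ne'
  obtain ⟨c, hc⟩ := exists_addChainLength_eq_add hpow
  set x : ℝ := n / 2 ^ Nat.log 2 n with hx
  have hmem : x ∈ chainRatio c :=
    ⟨n, Nat.log 2 n, hpow, hc ▸ hasChain_addChainLength hn, rfl⟩
  have hx1 : 1 ≤ x := one_le_of_mem_chainRatio hmem
  have hx2 : x < 2 := by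
    rw [hx, div_lt_iff₀ (by positivity), ← pow_succ']
    exact_mod_cast Nat.lt_pow_succ_log_self one_lt_two n
  have hdefect : addDefect n = c - Real.logb 2 x := addDefect_eq hn hc
  have hlog0 : 0 ≤ Real.logb 2 x := Real.logb_nonneg one_lt_two hx1
  have hlog1 : Real.logb 2 x < 1 := by
    rwa [Real.logb_lt_iff_lt_rpow one_lt_two (by positivity), Real.rpow_one]
  have hceil : ⌈addDefect n⌉₊ = c := by
    refine le_antisymm (Nat.ceil_le.2 (by linarith)) (Nat.lt_add_one_iff.1 ?_)
    have := Nat.le_ceil (addDefect n)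
    rify
    linarith
  rw [hceil, hdefect, sub_sub_cancel, Real.rpow_logb two_pos (by norm_num) (by positivity)]
  exact ⟨hmem, hx2⟩

theorem orderTypeLE_addDefectSet : OrderTypeLE addDefectSet (ω ^ ω) := by
  refine OrderTypeLE.of_monotoneOn_fiber (isPrincipal_add_omega0_opow ω) (f := fun d => ⌈d⌉₊)
    (Nat.ceil_mono.monotoneOn _) fun c => ⟨ω ^ (16 ^ c), ?_, ?_⟩
  · rw [← opow_natCast, opow_lt_opow_iff_right one_lt_omega0]
    exact natCast_lt_omega0 _
  · refine (orderTypeLE_neg_sparseDyadic (16 ^ c)).of_strictMonoOn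
      (g := fun d => -2 ^ (c - d)) (fun d _ d' _ hdd' => ?_) ?_
    · exact neg_lt_neg (Real.rpow_lt_rpow_of_exponent_lt one_lt_two (by linarith))
    · rintro d ⟨hd, rfl⟩
      have := two_rpow_ceil_sub_mem_chainRatio hd
      rw [Set.mem_neg, neg_neg]
      exact ⟨chainRatio_subset_sparseDyadic _ this.1, by positivity, this.2⟩

lemma exists_sub_logb_mem_addDefectSet {k : ℕ} {x : ℝ} (hx : x ∈ chainRatio k) :
    ∃ c ≤ k, c - Real.logb 2 x ∈ addDefectSet := by
  obtain ⟨m, e, hem, hchain, rfl⟩ := hx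
  have hm : 0 < m := (Nat.two_pow_pos e).trans_le hem
  obtain ⟨c, hc⟩ := exists_addChainLength_eq_add hem
  have := hchain.addChainLength_le
  exact ⟨c, by omega, m, hm, (addDefect_eq hm hc).symm⟩

theorem orderTypeGE_addDefectSet (k : ℕ) : OrderTypeGE addDefectSet (ω ^ k) := by
  have hcover : -(chainRatio (0 + k) ∩ Ico 1 (1 + 1)) ⊆
      ⋃ c : Fin (k + 1), {y | y < 0 ∧ c - Real.logb 2 (-y) ∈ addDefectSet} := by
    rintro y ⟨hy, hy1, -⟩
    rw [zero_add] at hy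
    obtain ⟨c, hc, hmem⟩ := exists_sub_logb_mem_addDefectSet hy
    exact mem_iUnion.2 ⟨⟨c, by omega⟩, by linarith, hmem⟩
  obtain ⟨c, hc⟩ := ((orderTypeGE_neg_chainRatio one_mem_chainRatio_zero one_pos k).superset
    hcover).exists_of_iUnion
  refine hc.map (g := fun y => c - Real.logb 2 (-y)) (fun y _ y' hy' hyy' => ?_) fun y hy => hy.2
  exact sub_lt_sub_left
    (Real.logb_lt_logb one_lt_two (neg_pos.2 hy'.1) (neg_lt_neg hyy')) _

/-- The set `𝒟^ℓ` of all addition chain defect values is a well-ordered subset of `ℝ`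
of order type exactly `ω ^ ω`. -/
theorem addition_chain_defect_set_wellOrdered_orderType_omega_pow_omega :
    {d : ℝ | ∃ n : ℕ, 0 < n ∧ d = addDefect n}.IsWF ∧
    setOrderType {d : ℝ | ∃ n : ℕ, 0 < n ∧ d = addDefect n} =
      Ordinal.omega0 ^ Ordinal.omega0 := by
  have hWF : addDefectSet.IsWF := orderTypeLE_addDefectSet.isWF
  refine ⟨hWF, le_antisymm orderTypeLE_addDefectSet.setOrderType_le ?_⟩
  rw [opow_le_of_isSuccLimit omega0_ne_zero isSuccLimit_omega0]
  intro o ho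
  obtain ⟨k, rfl⟩ := lt_omega0.1 ho
  rw [opow_natCast]
  exact (orderTypeGE_addDefectSet k).le_setOrderType hWF
end

section
/- Let A be an admissible set of addition chains and k ≥ 1 an integer. Then the set {δ^A(n) : n a positive integer with ν₂(n) = k} is a well-ordered subset of the real numbers with order type at least ω^(k−1) and at most ω^(k−1)·k (in particular, less than ω^k). The same holds for the set {δ^A_st(n) : n a positive integer with ν₂(n) = k}. -/
/-!
Since `⌊log₂ n⌋ ≤ ℓ^A(n) < ⌊log₂ n⌋ + ν₂(n)`, the defect of an `n` of binary weight `k` is `-log₂ x`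
plus one of the integers `0, …, k - 1`, where `x = n / 2 ^ ⌊log₂ n⌋ ∈ [1, 2)` is the significand
of `n`. Deleting the leading binary digit shows that the negated significands of weight `k + 1` form
an increasing sequence of `ω` blocks, each a scaled copy of those of weight `k`; hence those of
weight `k` have order type `ω ^ (k - 1)`. Applying `-log₂` puts this set inside `(-1, 0]`, so that
its translates by `0, …, k - 1` lie one above the other, which gives the upper bound. For the lower
bound, the translations used colour `ω ^ (k - 1)` with `k` colours, and one colour class again has
order type `ω ^ (k - 1)`: by induction each of the `ω` blocks has such a colour, and some colour
serves infinitely many blocks. Passing to stable defects only replaces `n` by some `2 ^ j * n`,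
which has the same significand and the same weight.
-/

section OrderType

open Ordinal

universe u

theorem omega0_pow_mul_natCast_lt (m k : ℕ) : ω ^ m * (k : Ordinal.{u}) < ω ^ (m + 1) := by
  rw [pow_succ]
  exact mul_lt_mul_of_pos_left (natCast_lt_omega0 k) (pow_pos omega0_pos m)

variable {X Y Z ι : Type u} [LinearOrder X] [LinearOrder Y]
  [LinearOrder Z] [WellFoundedLT Z] [LinearOrder ι] [WellFoundedLT ι] {S T : Set X}

theorem setOrderType_eq_type (hS : S.IsWF) :
    haveI : WellFoundedLT S := ⟨hS⟩
    setOrderType S = typeLT S :=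
  dif_pos hS

theorem isWF_of_strictMono {f : S → Z} (hf : StrictMono f) : S.IsWF :=
  hf.wellFoundedLT.wf

theorem le_setOrderType_iff (hS : S.IsWF) :
    typeLT Z ≤ setOrderType S ↔ ∃ f : Z → X, StrictMono f ∧ ∀ z, f z ∈ S := by
  have : WellFoundedLT S := ⟨hS⟩
  rw [setOrderType_eq_type hS, type_le_iff']
  constructor
  · rintro ⟨e⟩
    exact ⟨fun z ↦ e z, fun _ _ hlt ↦ e.map_rel_iff.2 hlt, fun z ↦ (e z).2⟩
  · rintro ⟨f, hf, hfS⟩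
    exact ⟨(OrderEmbedding.ofStrictMono (fun z ↦ (⟨f z, hfS z⟩ : S))
      fun _ _ hlt ↦ hf hlt).ltEmbedding⟩

theorem setOrderType_le_iff (hS : S.IsWF) :
    setOrderType S ≤ typeLT Z ↔ ∃ f : S → Z, StrictMono f := by
  have : WellFoundedLT S := ⟨hS⟩
  rw [setOrderType_eq_type hS, type_le_iff']
  constructor
  · rintro ⟨e⟩
    exact ⟨e, fun _ _ hlt ↦ e.map_rel_iff.2 hlt⟩
  · rintro ⟨f, hf⟩
    exact ⟨(OrderEmbedding.ofStrictMono f hf).ltEmbedding⟩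

theorem setOrderType_mono (hT : T.IsWF) (hST : S ⊆ T) : setOrderType S ≤ setOrderType T := by
  have : WellFoundedLT T := ⟨hT⟩
  rw [setOrderType_eq_type hT, setOrderType_le_iff (hT.mono hST)]
  exact ⟨Set.inclusion hST, fun _ _ hlt ↦ hlt⟩

theorem setOrderType_singleton (x : X) : setOrderType {x} = 1 := by
  rw [setOrderType_eq_type (Set.finite_singleton x).isWF]
  exact type_eq_one_of_unique _

theorem isWF_image_of_strictMonoOn {f : X → Y} (hf : StrictMonoOn f S) (hS : S.IsWF) :
    (f '' S).IsWF :=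
  (hS.isPWO.image_of_monotoneOn hf.monotoneOn).isWF

theorem setOrderType_image {f : X → Y} (hf : StrictMonoOn f S) (hS : S.IsWF) :
    setOrderType (f '' S) = setOrderType S := by
  have : WellFoundedLT S := ⟨hS⟩
  have : WellFoundedLT (f '' S) := ⟨isWF_image_of_strictMonoOn hf hS⟩
  rw [setOrderType_eq_type hS, setOrderType_eq_type (isWF_image_of_strictMonoOn hf hS)]
  exact (hf.orderIso f S).symm.toRelIsoLT.ordinalType_congr

theorem type_prodLex : typeLT (ι ×ₗ Z) = (typeLT Z) * typeLT ι :=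
  type_prod_lex (α := Z) (β := ι) (· < ·) (· < ·)

theorem setOrderType_le_mul_of_subset_iUnion_blocks {B : ι → Set X} {α : Ordinal.{u}}
    (hSB : S ⊆ ⋃ i, B i) (hB : ∀ i j, i < j → ∀ x ∈ B i, ∀ y ∈ B j, x < y)
    (hwf : ∀ i, (B i).IsWF) (hα : ∀ i, setOrderType (B i) ≤ α) :
    S.IsWF ∧ setOrderType S ≤ α * typeLT ι := by
  have hrank (i : ι) : ∃ f : B i → α.ToType, StrictMono f := by
    rw [← setOrderType_le_iff (hwf i), type_toType]
    exact hα i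
  choose rank hrank using hrank
  have rank_lt_rank : ∀ {i j}, i = j → ∀ {x y} (hx : x ∈ B i) (hy : y ∈ B j), x < y →
      rank i ⟨x, hx⟩ < rank j ⟨y, hy⟩ := by
    rintro i _ rfl x y hx hy hxy
    exact hrank i hxy
  choose block hblock using fun x : S ↦ Set.mem_iUnion.1 (hSB x.2)
  let f : S → ι ×ₗ α.ToType := fun x ↦ toLex (block x, rank _ ⟨x, hblock x⟩)
  have hf : StrictMono f := fun x y hxy ↦ by
    rcases lt_trichotomy (block x) (block y) with hlt | heq | hgt
    · exact Prod.Lex.toLex_lt_toLex.2 (Or.inl hlt)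
    · exact Prod.Lex.toLex_lt_toLex.2 (Or.inr ⟨heq, rank_lt_rank heq _ _ hxy⟩)
    · exact absurd hxy (hB _ _ hgt _ (hblock y) _ (hblock x)).not_gt
  have hS : S.IsWF := isWF_of_strictMono hf
  refine ⟨hS, ?_⟩
  rw [← type_toType α, ← type_prodLex, setOrderType_le_iff hS]
  exact ⟨f, hf⟩

theorem mul_le_setOrderType_iff_exists_blocks (hS : S.IsWF) {α : Ordinal.{u}} :
    α * typeLT ι ≤ setOrderType S ↔ ∃ B : ι → Set X, (∀ i, B i ⊆ S) ∧
      (∀ i j, i < j → ∀ x ∈ B i, ∀ y ∈ B j, x < y) ∧ ∀ i, α ≤ setOrderType (B i) := by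
  rw [← type_toType α, ← type_prodLex, le_setOrderType_iff hS]
  constructor
  · rintro ⟨f, hf, hfS⟩
    have hsub (i : ι) : Set.range (fun a ↦ f (toLex (i, a))) ⊆ S :=
      Set.range_subset_iff.2 fun a ↦ hfS _
    refine ⟨_, hsub, ?_, fun i ↦ ?_⟩
    · rintro i j hij _ ⟨a, rfl⟩ _ ⟨b, rfl⟩
      exact hf (Prod.Lex.toLex_lt_toLex.2 (Or.inl hij))
    · rw [le_setOrderType_iff (hS.mono (hsub i))]
      exact ⟨fun a ↦ f (toLex (i, a)),
        fun a b hab ↦ hf (Prod.Lex.toLex_lt_toLex.2 (Or.inr ⟨rfl, hab⟩)), Set.mem_range_self⟩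
  · rintro ⟨B, hBS, hB, hα⟩
    choose f hf hfB using fun i ↦ (le_setOrderType_iff (hS.mono (hBS i))).1 (hα i)
    refine ⟨fun p ↦ f (ofLex p).1 (ofLex p).2, fun p q hpq ↦ ?_, fun p ↦ hBS _ (hfB _ _)⟩
    rcases Prod.Lex.lt_iff.1 hpq with hlt | ⟨heq, hlt⟩
    · exact hB _ _ hlt _ (hfB _ _) _ (hfB _ _)
    · dsimp only
      rw [heq]
      exact hf _ hlt

end OrderType

section Partition

open Ordinal

theorem exists_omega0_pow_le_setOrderType_inter {X : Type} {ι : Type*} [LinearOrder X] [Finite ι]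
    {S : Set X} (hS : S.IsWF) {P : ι → Set X} (hP : S ⊆ ⋃ i, P i) {m : ℕ}
    (hm : ω ^ m ≤ setOrderType S) : ∃ i, ω ^ m ≤ setOrderType (S ∩ P i) := by
  induction m generalizing S with
  | zero =>
    rw [pow_zero, ← type_eq_one_of_unique (α := Unit) (· < ·), le_setOrderType_iff hS] at hm
    obtain ⟨f, -, hf⟩ := hm
    obtain ⟨i, hi⟩ := Set.mem_iUnion.1 (hP (hf ()))
    refine ⟨i, ?_⟩
    rw [pow_zero, ← setOrderType_singleton (f ())]
    exact setOrderType_mono (hS.mono Set.inter_subset_left) (by simp [hf, hi])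
  | succ m ih =>
    have hω : ω ^ (m + 1) = ω ^ m * typeLT ℕ := by rw [type_nat_lt, pow_succ]
    rw [hω, mul_le_setOrderType_iff_exists_blocks hS] at hm
    obtain ⟨B, hBS, hB, hm⟩ := hm
    choose color hcolor using fun n ↦ ih (hS.mono (hBS n)) ((hBS n).trans hP) (hm n)
    obtain ⟨i, hi⟩ := Finite.exists_infinite_fiber color
    let e := Nat.Subtype.orderIsoOfNat (color ⁻¹' {i})
    have he (n : ℕ) : color (e n) = i := (e n).2
    refine ⟨i, ?_⟩
    rw [hω, mul_le_setOrderType_iff_exists_blocks (hS.mono Set.inter_subset_left)]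
    refine ⟨fun n ↦ B (e n) ∩ P i, fun n ↦ Set.inter_subset_inter_left _ (hBS _),
      fun n n' hlt x hx y hy ↦ hB _ _ (e.strictMono hlt) x hx.1 y hy.1, fun n ↦ ?_⟩
    simpa only [he] using hcolor (e n)

end Partition

section Translates

open Ordinal

variable {F D : Set ℝ} {k : ℕ}

theorem setOrderType_le_mul_of_subset_translates (hF : F.IsWF)
    (hlt : ∀ x ∈ F, ∀ y ∈ F, x < y + 1) (hD : ∀ d ∈ D, ∃ t ∈ F, ∃ s < k, d = t + s) :
    D.IsWF ∧ setOrderType D ≤ setOrderType F * k := by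
  have hmono (s : Fin k) : StrictMonoOn (· + (s : ℝ)) F := fun _ _ _ _ hlt ↦ by simpa using hlt
  rw [← type_fin k]
  refine setOrderType_le_mul_of_subset_iUnion_blocks (B := fun s : Fin k ↦ (· + (s : ℝ)) '' F)
    ?_ ?_ (fun s ↦ isWF_image_of_strictMonoOn (hmono s) hF)
    (fun s ↦ (setOrderType_image (hmono s) hF).le)
  · intro d hd
    obtain ⟨t, ht, s, hs, rfl⟩ := hD d hd
    exact Set.mem_iUnion.2 ⟨⟨s, hs⟩, t, ht, rfl⟩
  · rintro i j hij _ ⟨x, hx, rfl⟩ _ ⟨y, hy, rfl⟩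
    have hij' : (i : ℝ) + 1 ≤ j := by exact_mod_cast hij
    linarith [hlt x hx y hy]

theorem omega0_pow_le_setOrderType_of_translates {m : ℕ} (hF : F.IsWF) (hD : D.IsWF)
    (hm : ω ^ m ≤ setOrderType F) (hFD : ∀ t ∈ F, ∃ s < k, t + (s : ℕ) ∈ D) :
    ω ^ m ≤ setOrderType D := by
  have hcover : F ⊆ ⋃ s : Fin k, (· + (s : ℝ)) ⁻¹' D := fun t ht ↦ by
    obtain ⟨s, hs, hts⟩ := hFD t ht
    exact Set.mem_iUnion.2 ⟨⟨s, hs⟩, hts⟩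
  obtain ⟨s, hs⟩ := exists_omega0_pow_le_setOrderType_inter hF hcover hm
  have hmono : StrictMonoOn (· + (s : ℝ)) (F ∩ (· + (s : ℝ)) ⁻¹' D) :=
    fun _ _ _ _ hlt ↦ by simpa using hlt
  calc ω ^ m ≤ setOrderType (F ∩ (· + (s : ℝ)) ⁻¹' D) := hs
    _ = setOrderType ((· + (s : ℝ)) '' (F ∩ (· + (s : ℝ)) ⁻¹' D)) :=
      (setOrderType_image hmono (hF.mono Set.inter_subset_left)).symm
    _ ≤ setOrderType D := setOrderType_mono hD (Set.image_subset_iff.2 Set.inter_subset_right)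

end Translates

section BinaryExpansion

theorem exists_eq_two_pow_add {n : ℕ} (hn : n ≠ 0) : ∃ a, ∃ r < 2 ^ a, n = 2 ^ a + r := by
  have hle := Nat.pow_log_le_self 2 hn
  have hlt := Nat.lt_pow_succ_log_self one_lt_two n
  exact ⟨Nat.log 2 n, n - 2 ^ Nat.log 2 n, by omega, by omega⟩

theorem binaryWeight_zero : binaryWeight 0 = 0 := by
  simp [binaryWeight]

theorem binaryWeight_two_pow_add {a r : ℕ} (hr : r < 2 ^ a) :
    binaryWeight (2 ^ a + r) = binaryWeight r + 1 := by
  obtain ⟨i, rfl⟩ := Nat.exists_eq_add_of_le ((Nat.digits_length_le_iff one_lt_two r).2 hr)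
  have hdigits := Nat.digits_append_zeroes_append_digits (k := i) (n := r) one_lt_two one_pos
  rw [mul_one, add_comm r] at hdigits
  rw [binaryWeight, ← hdigits]
  simp [binaryWeight]

theorem binaryWeight_two_pow_mul (j n : ℕ) : binaryWeight (2 ^ j * n) = binaryWeight n := by
  rcases n.eq_zero_or_pos with rfl | hn
  · rw [mul_zero]
  · simp [binaryWeight, Nat.digits_base_pow_mul one_lt_two hn]

theorem binaryWeight_eq_zero_iff {n : ℕ} : binaryWeight n = 0 ↔ n = 0 := by
  refine ⟨fun hweight ↦ ?_, fun hn ↦ hn ▸ binaryWeight_zero⟩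
  by_contra hn
  obtain ⟨a, r, hr, rfl⟩ := exists_eq_two_pow_add hn
  simp [binaryWeight_two_pow_add hr] at hweight

theorem pos_of_binaryWeight_eq_succ {n m : ℕ} (hn : binaryWeight n = m + 1) : 0 < n :=
  Nat.pos_of_ne_zero fun h ↦ by simp [h, binaryWeight_zero] at hn

theorem binaryWeight_eq_one_iff {n : ℕ} : binaryWeight n = 1 ↔ ∃ a, n = 2 ^ a := by
  constructor
  · intro hweight
    obtain ⟨a, r, hr, rfl⟩ := exists_eq_two_pow_add (pos_of_binaryWeight_eq_succ hweight).ne'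
    rw [binaryWeight_two_pow_add hr, Nat.add_eq_right, binaryWeight_eq_zero_iff] at hweight
    exact ⟨a, by rw [hweight, add_zero]⟩
  · rintro ⟨a, rfl⟩
    rw [← add_zero (2 ^ a), binaryWeight_two_pow_add (by positivity), binaryWeight_zero]

theorem lt_two_pow_log_add_succ (n i : ℕ) : n < 2 ^ (Nat.log 2 n + (i + 1)) :=
  (Nat.lt_pow_succ_log_self one_lt_two n).trans_le (Nat.pow_le_pow_right two_pos (by omega))

theorem binaryWeight_eq_succ_iff {n m : ℕ} (hm : m ≠ 0) :
    binaryWeight n = m + 1 ↔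
      ∃ r i, binaryWeight r = m ∧ n = 2 ^ (Nat.log 2 r + (i + 1)) + r := by
  constructor
  · intro hweight
    obtain ⟨a, r, hr, rfl⟩ := exists_eq_two_pow_add (pos_of_binaryWeight_eq_succ hweight).ne'
    rw [binaryWeight_two_pow_add hr, Nat.add_right_cancel_iff] at hweight
    have hr0 : r ≠ 0 := by rintro rfl; exact hm (hweight ▸ binaryWeight_zero)
    obtain ⟨i, rfl⟩ := Nat.exists_eq_add_of_lt (Nat.log_lt_of_lt_pow hr0 hr)
    exact ⟨r, i, hweight, rfl⟩
  · rintro ⟨r, i, rfl, rfl⟩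
    exact binaryWeight_two_pow_add (lt_two_pow_log_add_succ r i)

theorem log_two_pow_add {a r : ℕ} (hr : r < 2 ^ a) : Nat.log 2 (2 ^ a + r) = a :=
  Nat.log_eq_of_pow_le_of_lt_pow (Nat.le_add_right _ _) (by rw [pow_succ]; omega)

theorem log_two_pow_mul (j : ℕ) {n : ℕ} (hn : n ≠ 0) :
    Nat.log 2 (2 ^ j * n) = j + Nat.log 2 n := by
  induction j with
  | zero => simp
  | succ j ih =>
    rw [pow_succ, mul_right_comm, Nat.log_mul_base one_lt_two (by positivity), ih]
    ring

/-- The significand `n / 2 ^ ⌊log₂ n⌋ ∈ [1, 2)` of the floating-point form of `n ≠ 0`. -/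
noncomputable def significand (n : ℕ) : ℝ := n / 2 ^ Nat.log 2 n

theorem one_le_significand {n : ℕ} (hn : n ≠ 0) : 1 ≤ significand n := by
  rw [significand, one_le_div (by positivity)]
  exact_mod_cast Nat.pow_log_le_self 2 hn

theorem significand_lt_two (n : ℕ) : significand n < 2 := by
  rw [significand, div_lt_iff₀ (by positivity), ← pow_succ']
  exact_mod_cast Nat.lt_pow_succ_log_self one_lt_two n

theorem significand_two_pow_mul (j n : ℕ) : significand (2 ^ j * n) = significand n := by
  rcases eq_or_ne n 0 with rfl | hn
  · rw [mul_zero]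
  · rw [significand, significand, log_two_pow_mul j hn, pow_add]
    push_cast
    field_simp

theorem significand_two_pow_add {a r : ℕ} (hr : r < 2 ^ a) :
    significand (2 ^ a + r) = 1 + r / 2 ^ a := by
  rw [significand, log_two_pow_add hr]
  push_cast
  field_simp

theorem significand_two_pow_log_add_add (n i : ℕ) :
    significand (2 ^ (Nat.log 2 n + (i + 1)) + n) = 1 + significand n / 2 ^ (i + 1) := by
  rw [significand_two_pow_add (lt_two_pow_log_add_succ n i), significand, pow_add, div_div]

theorem logb_two_eq_log_add_logb_significand {n : ℕ} (hn : n ≠ 0) :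
    Real.logb 2 n = Nat.log 2 n + Real.logb 2 (significand n) := by
  rw [significand, Real.logb_div (by positivity) (by positivity), Real.logb_pow,
    Real.logb_self_eq_one one_lt_two]
  ring

end BinaryExpansion

section NegSignificands

open Ordinal

/-- The negated significands of the integers of binary weight `k`. The sign makes the set
well-ordered: the significands themselves accumulate only from above. -/
def negSignificands (k : ℕ) : Set ℝ := (fun n ↦ -significand n) '' {n | binaryWeight n = k}

theorem negSignificands_subset_Ioc (m : ℕ) : negSignificands (m + 1) ⊆ Set.Ioc (-2) (-1) := by
  rintro _ ⟨n, hn, rfl⟩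
  have hn0 : 0 < n := pos_of_binaryWeight_eq_succ hn
  exact ⟨neg_lt_neg (significand_lt_two n), neg_le_neg (one_le_significand hn0.ne')⟩

theorem negSignificands_one : negSignificands 1 = {-1} := by
  have hpow (a : ℕ) : significand (2 ^ a) = 1 := by
    simpa using significand_two_pow_add (a := a) (r := 0) (by positivity)
  ext y
  simp [negSignificands, binaryWeight_eq_one_iff, hpow, eq_comm]

/-- Deleting the leading binary digit of an integer of weight `m + 1` leaves one of weight `m`. -/
theorem negSignificands_succ {m : ℕ} (hm : m ≠ 0) :
    negSignificands (m + 1) = ⋃ i : ℕ, (fun y ↦ y / 2 ^ (i + 1) - 1) '' negSignificands m := by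
  have hsig (r i : ℕ) : -significand (2 ^ (Nat.log 2 r + (i + 1)) + r) =
      -significand r / 2 ^ (i + 1) - 1 := by
    rw [significand_two_pow_log_add_add]
    ring
  ext y
  simp only [negSignificands, Set.mem_image, Set.mem_iUnion, Set.mem_ofPred_eq,
    binaryWeight_eq_succ_iff hm, exists_exists_and_eq_and]
  constructor
  · rintro ⟨_, ⟨r, i, hr, rfl⟩, rfl⟩
    exact ⟨i, r, hr, (hsig r i).symm⟩
  · rintro ⟨i, r, hr, rfl⟩
    exact ⟨_, ⟨r, i, hr, rfl⟩, hsig r i⟩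

theorem div_two_pow_sub_one_lt_of_lt {i j : ℕ} (hij : i < j) {x y : ℝ} (hx : x ≤ -1)
    (hy : -2 < y) : x / 2 ^ (i + 1) - 1 < y / 2 ^ (j + 1) - 1 := by
  have hpow : (2 : ℝ) ^ (i + 1) ≤ 2 ^ j := pow_le_pow_right₀ one_le_two hij
  have hx' : x / 2 ^ (i + 1) ≤ -1 / 2 ^ (i + 1) := by gcongr
  have hpow' : -1 / 2 ^ (i + 1) ≤ -1 / (2 : ℝ) ^ j := by
    rw [neg_div, neg_div]
    gcongr
  have hy' : -1 / 2 ^ j < y / (2 : ℝ) ^ (j + 1) := by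
    rw [div_lt_div_iff₀ (by positivity) (by positivity), pow_succ]
    nlinarith [pow_pos (two_pos (α := ℝ)) j]
  linarith

theorem isWF_and_setOrderType_negSignificands (m : ℕ) :
    (negSignificands (m + 1)).IsWF ∧ setOrderType (negSignificands (m + 1)) = ω ^ m := by
  induction m with
  | zero =>
    rw [zero_add, negSignificands_one, pow_zero]
    exact ⟨(Set.finite_singleton _).isWF, setOrderType_singleton _⟩
  | succ m ih =>
    obtain ⟨hwf, htype⟩ := ih
    let B : ℕ → Set ℝ := fun i ↦ (fun y ↦ y / 2 ^ (i + 1) - 1) '' negSignificands (m + 1)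
    have hB : ∀ i j, i < j → ∀ x ∈ B i, ∀ y ∈ B j, x < y := by
      rintro i j hij _ ⟨x, hx, rfl⟩ _ ⟨y, hy, rfl⟩
      exact div_two_pow_sub_one_lt_of_lt hij (negSignificands_subset_Ioc m hx).2
        (negSignificands_subset_Ioc m hy).1
    have hmono (i : ℕ) :
        StrictMonoOn (fun y : ℝ ↦ y / 2 ^ (i + 1) - 1) (negSignificands (m + 1)) :=
      fun x _ y _ hxy ↦ by dsimp only; gcongr
    have hBtype (i : ℕ) : setOrderType (B i) = ω ^ m := by
      rw [setOrderType_image (hmono i) hwf, htype]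
    have hω : ω ^ (m + 1) = ω ^ m * typeLT ℕ := by rw [type_nat_lt, pow_succ]
    rw [negSignificands_succ m.succ_ne_zero, hω]
    obtain ⟨hBwf, hle⟩ := setOrderType_le_mul_of_subset_iUnion_blocks subset_rfl hB
      (fun i ↦ isWF_image_of_strictMonoOn (hmono i) hwf) (fun i ↦ (hBtype i).le)
    exact ⟨hBwf, hle.antisymm ((mul_le_setOrderType_iff_exists_blocks hBwf).2
      ⟨B, Set.subset_iUnion B, hB, fun i ↦ (hBtype i).ge⟩)⟩

end NegSignificands

section NegLogSignificands

open Ordinal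

/-- The values `-log₂` of the significands of the integers of binary weight `k`: the `A`-defects
of weight `k` reduced modulo `1`. -/
def negLogSignificands (k : ℕ) : Set ℝ :=
  (fun n ↦ -Real.logb 2 (significand n)) '' {n | binaryWeight n = k}

theorem negLogSignificands_subset_Ioc (m : ℕ) :
    negLogSignificands (m + 1) ⊆ Set.Ioc (-1) 0 := by
  rintro _ ⟨n, hn, rfl⟩
  have hone : 1 ≤ significand n := one_le_significand (pos_of_binaryWeight_eq_succ hn).ne'
  have hlt : Real.logb 2 (significand n) < Real.logb 2 2 :=
    Real.logb_lt_logb one_lt_two (by positivity) (significand_lt_two n)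
  rw [Real.logb_self_eq_one one_lt_two] at hlt
  exact ⟨neg_lt_neg hlt, neg_nonpos.2 (Real.logb_nonneg one_lt_two hone)⟩

theorem negLogSignificands_eq_image (k : ℕ) :
    negLogSignificands k = (fun y ↦ -Real.logb 2 (-y)) '' negSignificands k := by
  simp [negLogSignificands, negSignificands, Set.image_image]

theorem strictMonoOn_neg_logb_neg {b : ℝ} (hb : 1 < b) :
    StrictMonoOn (fun y ↦ -Real.logb b (-y)) (Set.Iio 0) :=
  fun _ _ _ hy hlt ↦ neg_lt_neg (Real.logb_lt_logb hb (neg_pos.2 hy) (neg_lt_neg hlt))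

theorem isWF_and_setOrderType_negLogSignificands (m : ℕ) :
    (negLogSignificands (m + 1)).IsWF ∧ setOrderType (negLogSignificands (m + 1)) = ω ^ m := by
  obtain ⟨hwf, htype⟩ := isWF_and_setOrderType_negSignificands m
  have hmono : StrictMonoOn (fun y ↦ -Real.logb 2 (-y)) (negSignificands (m + 1)) :=
    (strictMonoOn_neg_logb_neg one_lt_two).mono fun y hy ↦
      (negSignificands_subset_Ioc m hy).2.trans_lt neg_one_lt_zero
  rw [negLogSignificands_eq_image, setOrderType_image hmono hwf]
  exact ⟨isWF_image_of_strictMonoOn hmono hwf, htype⟩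

end NegLogSignificands

section ChainLength

open Ordinal

theorem IsAdditionChain.length_pos {c : List ℕ} (hc : IsAdditionChain c) : 0 < c.length := by
  refine List.length_pos_of_ne_nil ?_
  rintro rfl
  simpa using hc.1

theorem IsAdditionChain.getD_le_two_pow {c : List ℕ} (hc : IsAdditionChain c) (k : ℕ) :
    c.getD k 0 ≤ 2 ^ k := by
  induction k using Nat.strong_induction_on with
  | _ k ih =>
    rcases le_or_gt c.length k with hk | hk
    · rw [List.getD_eq_default _ _ hk]
      exact Nat.zero_le _
    · rcases k with _ | k
      · exact hc.1.le
      obtain ⟨i, j, hi, hj, hsum⟩ := hc.2 (k + 1) k.succ_pos hk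
      calc c.getD (k + 1) 0 = c.getD i 0 + c.getD j 0 := hsum
        _ ≤ 2 ^ i + 2 ^ j := add_le_add (ih i hi) (ih j hj)
        _ ≤ 2 ^ k + 2 ^ k :=
          add_le_add (Nat.pow_le_pow_right two_pos (Nat.le_of_lt_succ hi))
            (Nat.pow_le_pow_right two_pos (Nat.le_of_lt_succ hj))
        _ = 2 ^ (k + 1) := by ring

variable {A : Set (List ℕ)} {n : ℕ}

namespace Admissible

theorem chainLength_lt (hA : Admissible A) (hn : 0 < n) :
    chainLength A n < Nat.log 2 n + binaryWeight n := by
  obtain ⟨c, hcA, hc, hlen⟩ := hA.1 n hn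
  have hpos := hc.1.length_pos
  have hle : chainLength A n ≤ c.length - 1 := Nat.sInf_le ⟨c, hcA, hc, by omega⟩
  omega

theorem exists_chain_length_eq (hA : Admissible A) (hn : 0 < n) :
    ∃ c, IsAdditionChainFor c n ∧ c.length = chainLength A n + 1 := by
  obtain ⟨c, hcA, hc, -⟩ := hA.1 n hn
  have hne : {r | ∃ c ∈ A, IsAdditionChainFor c n ∧ c.length = r + 1}.Nonempty :=
    ⟨c.length - 1, c, hcA, hc, (Nat.sub_add_cancel hc.1.length_pos).symm⟩
  obtain ⟨c, -, hc, hlen⟩ := Nat.sInf_mem hne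
  exact ⟨c, hc, hlen⟩

theorem le_two_pow_chainLength (hA : Admissible A) (hn : 0 < n) : n ≤ 2 ^ chainLength A n := by
  obtain ⟨c, ⟨hc, hlast⟩, hlen⟩ := hA.exists_chain_length_eq hn
  rw [hlen, Nat.add_sub_cancel] at hlast
  calc n = c.getD (chainLength A n) 0 := hlast.symm
    _ ≤ 2 ^ chainLength A n := hc.getD_le_two_pow _

theorem log_le_chainLength (hA : Admissible A) (hn : 0 < n) :
    Nat.log 2 n ≤ chainLength A n := by
  simpa using Nat.log_mono_right (b := 2) (hA.le_two_pow_chainLength hn)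

theorem exists_Adefect_eq (hA : Admissible A) (hn : 0 < n) :
    ∃ s < binaryWeight n, Adefect A n = -Real.logb 2 (significand n) + s := by
  obtain ⟨s, hs⟩ := Nat.exists_eq_add_of_le (hA.log_le_chainLength hn)
  have hlt := hA.chainLength_lt hn
  refine ⟨s, by omega, ?_⟩
  rw [Adefect, hs, logb_two_eq_log_add_logb_significand hn.ne']
  push_cast
  ring

theorem chainLength_two_pow_mul_le (hA : Admissible A) (hn : 0 < n) (j : ℕ) :
    chainLength A (2 ^ j * n) ≤ chainLength A n + j := by
  induction j with
  | zero => simp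
  | succ j ih =>
    calc chainLength A (2 ^ (j + 1) * n) = chainLength A (2 * (2 ^ j * n)) := by ring_nf
      _ ≤ chainLength A (2 ^ j * n) + 1 := hA.2 _ (by positivity)
      _ ≤ chainLength A n + (j + 1) := by omega

theorem le_chainLength_two_pow_mul (hA : Admissible A) (hn : 0 < n) (j : ℕ) :
    j ≤ chainLength A (2 ^ j * n) := by
  have hlog := hA.log_le_chainLength (n := 2 ^ j * n) (by positivity)
  rw [log_two_pow_mul j hn.ne'] at hlog
  omega

theorem exists_AStable_two_pow_mul (hA : Admissible A) (hn : 0 < n) :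
    ∃ j, AStable A (2 ^ j * n) := by
  let excess : ℕ → ℕ := fun j ↦ chainLength A (2 ^ j * n) - j
  let j := Function.argmin excess
  refine ⟨j, fun i ↦ le_antisymm (hA.chainLength_two_pow_mul_le (by positivity) i) ?_⟩
  have hmin : excess j ≤ excess (i + j) := Function.argmin_le excess (i + j)
  have hj := hA.le_chainLength_two_pow_mul hn j
  have hij := hA.le_chainLength_two_pow_mul hn (i + j)
  rw [← mul_assoc, ← pow_add]
  simp only [excess] at hmin
  omega

theorem isWF_and_setOrderType_Adefect_image (hA : Admissible A) {E : Set ℕ} {m : ℕ}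
    (hE : ∀ n ∈ E, binaryWeight n = m + 1)
    (hE' : ∀ n, binaryWeight n = m + 1 → ∃ j, 2 ^ j * n ∈ E) :
    (Adefect A '' E).IsWF ∧ ω ^ m ≤ setOrderType (Adefect A '' E) ∧
      setOrderType (Adefect A '' E) ≤ ω ^ m * (m + 1 : ℕ) := by
  have hdefect (n) (hn : n ∈ E) : ∃ s < m + 1, Adefect A n = -Real.logb 2 (significand n) + s :=
    hE n hn ▸ hA.exists_Adefect_eq (pos_of_binaryWeight_eq_succ (hE n hn))
  obtain ⟨hwf, htype⟩ := isWF_and_setOrderType_negLogSignificands m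
  have hlt : ∀ x ∈ negLogSignificands (m + 1), ∀ y ∈ negLogSignificands (m + 1), x < y + 1 :=
    fun x hx y hy ↦ by
      linarith [(negLogSignificands_subset_Ioc m hx).2, (negLogSignificands_subset_Ioc m hy).1]
  have hcover : ∀ d ∈ Adefect A '' E, ∃ t ∈ negLogSignificands (m + 1), ∃ s < m + 1, d = t + s := by
    rintro _ ⟨n, hn, rfl⟩
    exact ⟨_, ⟨n, hE n hn, rfl⟩, hdefect n hn⟩
  have hlift : ∀ t ∈ negLogSignificands (m + 1), ∃ s < m + 1, t + (s : ℕ) ∈ Adefect A '' E := by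
    rintro _ ⟨n, hn, rfl⟩
    obtain ⟨j, hj⟩ := hE' n hn
    obtain ⟨s, hs, heq⟩ := hdefect _ hj
    rw [significand_two_pow_mul] at heq
    exact ⟨s, hs, _, hj, heq⟩
  obtain ⟨hD, hle⟩ := setOrderType_le_mul_of_subset_translates hwf hlt hcover
  exact ⟨hD, omega0_pow_le_setOrderType_of_translates hwf hD htype.ge hlift, htype ▸ hle⟩

end Admissible

theorem setOf_Adefect_eq_image (A : Set (List ℕ)) (k : ℕ) :
    {d : ℝ | ∃ n : ℕ, 0 < n ∧ binaryWeight n = k ∧ d = Adefect A n} =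
      Adefect A '' {n | 0 < n ∧ binaryWeight n = k} := by
  ext d
  simp [and_assoc, eq_comm]

theorem setOf_stable_Adefect_eq_image (A : Set (List ℕ)) (k : ℕ) :
    {d : ℝ | ∃ n : ℕ, 0 < n ∧ binaryWeight n = k ∧
        ∃ j : ℕ, AStable A (2 ^ j * n) ∧ d = Adefect A (2 ^ j * n)} =
      Adefect A '' {n | 0 < n ∧ binaryWeight n = k ∧ AStable A n} := by
  ext d
  constructor
  · rintro ⟨n, hn, hweight, j, hstable, rfl⟩
    exact ⟨2 ^ j * n, ⟨by positivity, (binaryWeight_two_pow_mul j n).trans hweight, hstable⟩, rfl⟩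
  · rintro ⟨n, ⟨hn, hweight, hstable⟩, rfl⟩
    exact ⟨n, hn, hweight, 0, by simpa using hstable, by simp⟩

end ChainLength

/-- For `k ≥ 1`, the set `{δ^A(n) : ν₂(n) = k}` is a well-ordered subset of `ℝ` with
order type at least `ω^(k-1)` and at most `ω^(k-1)·k < ω^k`; the same holds for the
set `{δ^A_st(n) : ν₂(n) = k}` of stable defects. -/
theorem defects_of_fixed_binaryWeight_orderType
    (A : Set (List ℕ)) (hA : Admissible A) (k : ℕ) (hk : 1 ≤ k) :
    ({d : ℝ | ∃ n : ℕ, 0 < n ∧ binaryWeight n = k ∧ d = Adefect A n}.IsWF ∧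
      Ordinal.omega0 ^ ((k - 1 : ℕ) : Ordinal) ≤
        setOrderType {d : ℝ | ∃ n : ℕ, 0 < n ∧ binaryWeight n = k ∧ d = Adefect A n} ∧
      setOrderType {d : ℝ | ∃ n : ℕ, 0 < n ∧ binaryWeight n = k ∧ d = Adefect A n} ≤
        Ordinal.omega0 ^ ((k - 1 : ℕ) : Ordinal) * k ∧
      Ordinal.omega0 ^ ((k - 1 : ℕ) : Ordinal) * k < Ordinal.omega0 ^ (k : Ordinal)) ∧
    ({d : ℝ | ∃ n : ℕ, 0 < n ∧ binaryWeight n = k ∧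
        ∃ j : ℕ, AStable A (2 ^ j * n) ∧ d = Adefect A (2 ^ j * n)}.IsWF ∧
      Ordinal.omega0 ^ ((k - 1 : ℕ) : Ordinal) ≤
        setOrderType {d : ℝ | ∃ n : ℕ, 0 < n ∧ binaryWeight n = k ∧
          ∃ j : ℕ, AStable A (2 ^ j * n) ∧ d = Adefect A (2 ^ j * n)} ∧
      setOrderType {d : ℝ | ∃ n : ℕ, 0 < n ∧ binaryWeight n = k ∧
          ∃ j : ℕ, AStable A (2 ^ j * n) ∧ d = Adefect A (2 ^ j * n)} ≤
        Ordinal.omega0 ^ ((k - 1 : ℕ) : Ordinal) * k) := by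
  obtain ⟨m, rfl⟩ : ∃ m, k = m + 1 := Nat.exists_eq_add_of_le' hk
  rw [setOf_Adefect_eq_image, setOf_stable_Adefect_eq_image, Nat.add_sub_cancel]
  simp only [Ordinal.opow_natCast]
  obtain ⟨hwf, hge, hle⟩ := hA.isWF_and_setOrderType_Adefect_image (m := m)
    (E := {n | 0 < n ∧ binaryWeight n = m + 1}) (fun n hn ↦ hn.2)
    (fun n hn ↦ ⟨0, by simpa [pos_of_binaryWeight_eq_succ hn] using hn⟩)
  refine ⟨⟨hwf, hge, hle, omega0_pow_mul_natCast_lt m (m + 1)⟩, ?_⟩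
  refine hA.isWF_and_setOrderType_Adefect_image (fun n hn ↦ hn.2.1) fun n hn ↦ ?_
  have hpos : 0 < n := pos_of_binaryWeight_eq_succ hn
  obtain ⟨j, hstable⟩ := hA.exists_AStable_two_pow_mul hpos
  exact ⟨j, by positivity, (binaryWeight_two_pow_mul j n).trans hn, hstable⟩
end
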